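/- There exists a constant C > 0 such that for every Boolean function f : 𝔽₂ⁿ → {1,−1} with Fourier sparsity s, there is an affine subspace V of 𝔽₂ⁿ of co-dimension at most C·√s such that f is constant on V. -/

import Mathlib

/-!
The proof bounds the codimension by a multiple of the spectral norm `A = ∑ |f̂|`, which is at most
`√s` by Parseval and Cauchy–Schwarz. It restricts `f` greedily to hyperplanes. Let `α`, `β` carry
the two largest Fourier coefficients in absolute value, `a₁ ≥ a₂ > 0`, and restrict to the
hyperplane `(α + β)(x) = b` on which the two coefficients add up with the same sign.

* The largest coefficient grows to at least `a₁ + a₂`, and `1 - a₁² = ∑_{δ ≠ α} f̂(δ)² ≤ a₂ A`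
  (`one_sub_sq_le`).
* Since `f² = 1`, the autocorrelation `∑_δ f̂(δ) f̂(δ + α + β)` vanishes (`autocorr`). The pair
  `{α, β}` contributes to it with the favourable sign, so pairs with the other sign must compensate
  for it; they cancel partially in the restriction, and since all their coefficients are at most
  `a₂`, the spectral norm drops by at least `2 a₁` (`fold_norm_le`).

Hence `A + (4/3) A₀ (1 - a₁)`, where `A₀` is the initial spectral norm, drops by at least `1` in
every step: if `a₁ ≥ 1/2` because of the first summand, if `a₁ < 1/2` because of the second. After
`O(A₀)` steps only one Fourier coefficient is left, and one further restriction makes the function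
constant.

Linear forms are encoded by vectors through the dot product. A restriction to a hyperplane is
replaced by its extension that is constant along a transversal direction `v`, so that all functions
live on the same space (`foldCoeff`).
-/

/-- The dual space of `𝔽₂ⁿ`: linear forms `𝔽₂ⁿ → 𝔽₂`. -/
abbrev DualF (n : ℕ) : Type := (Fin n → ZMod 2) →ₗ[ZMod 2] ZMod 2

/-- A Boolean function takes values in `{1, -1} ⊆ ℝ`. -/
def IsBooleanFn (n : ℕ) (f : (Fin n → ZMod 2) → ℝ) : Prop :=
  ∀ x, f x = 1 ∨ f x = -1

/-- Fourier coefficient `f̂(γ) = 2⁻ⁿ Σ_x f(x) (-1)^(γ x)`. -/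
noncomputable def fCoeff (n : ℕ) (f : (Fin n → ZMod 2) → ℝ) (γ : DualF n) : ℝ :=
  (2 ^ n : ℝ)⁻¹ * ∑ x : Fin n → ZMod 2, f x * (-1 : ℝ) ^ (γ x).val

/-- Fourier support. -/
noncomputable def fSupp (n : ℕ) (f : (Fin n → ZMod 2) → ℝ) : Set (DualF n) :=
  {γ | fCoeff n f γ ≠ 0}

/-- Fourier sparsity. -/
noncomputable def fSpar (n : ℕ) (f : (Fin n → ZMod 2) → ℝ) : ℕ :=
  (fSupp n f).ncard

/-- Fourier dimension: dimension of the 𝔽₂-span of the Fourier support. -/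
noncomputable def fDim (n : ℕ) (f : (Fin n → ZMod 2) → ℝ) : ℕ :=
  Module.finrank (ZMod 2) (Submodule.span (ZMod 2) (fSupp n f))

open Finset

/-- The nontrivial additive character `a ↦ (-1)^a` of `ZMod 2`. -/
noncomputable def sgn (a : ZMod 2) : ℝ := (-1 : ℝ) ^ a.val

/-- The function on `𝔽₂ⁿ` with Fourier coefficients `F`, where the vector `a` stands for the linear
form `x ↦ a ⬝ᵥ x`. -/
noncomputable def synth {n : ℕ} (F : (Fin n → ZMod 2) → ℝ) (x : Fin n → ZMod 2) : ℝ :=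
  ∑ a, F a * sgn (a ⬝ᵥ x)

/-- The Fourier coefficients of the function that agrees with `synth F` on the hyperplane
`c ⬝ᵥ x = b` and is invariant under translation by `v`, when `c ⬝ᵥ v = 1`. -/
noncomputable def foldCoeff {n : ℕ} (F : (Fin n → ZMod 2) → ℝ) (c v : Fin n → ZMod 2) (b : ZMod 2)
    (d : Fin n → ZMod 2) : ℝ :=
  if d ⬝ᵥ v = 0 then F d + sgn b * F (d + c) else 0

/-! ### Characters of `𝔽₂ⁿ` -/

lemma zmod_two_cases (a : ZMod 2) : a = 0 ∨ a = 1 := by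
  revert a; decide

@[simp] lemma sgn_zero : sgn 0 = 1 := by simp [sgn]

@[simp] lemma sgn_one : sgn 1 = -1 := by simp [sgn, ZMod.val_one]

lemma sgn_add (a b : ZMod 2) : sgn (a + b) = sgn a * sgn b := by
  have h2 : (1 + 1 : ZMod 2) = 0 := by decide
  rcases zmod_two_cases a with rfl | rfl <;> rcases zmod_two_cases b with rfl | rfl <;> simp [h2]

lemma sgn_mul_self (a : ZMod 2) : sgn a * sgn a = 1 := by
  rcases zmod_two_cases a with rfl | rfl <;> simp

lemma vec_add_self {n : ℕ} (a : Fin n → ZMod 2) : a + a = 0 := by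
  funext i; exact CharTwo.add_self_eq_zero _

lemma vec_add_add {n : ℕ} (a c : Fin n → ZMod 2) : a + c + c = a := by
  rw [add_assoc, vec_add_self, add_zero]

lemma sum_shift {n : ℕ} (h : (Fin n → ZMod 2) → ℝ) (c : Fin n → ZMod 2) :
    ∑ d, h (d + c) = ∑ d, h d :=
  Equiv.sum_comp (Equiv.addRight c) h

lemma exists_dot_eq_one {n : ℕ} {a : Fin n → ZMod 2} (ha : a ≠ 0) :
    ∃ v : Fin n → ZMod 2, a ⬝ᵥ v = 1 := by
  obtain ⟨i, hi⟩ := Function.ne_iff.mp ha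
  refine ⟨Pi.single i 1, ?_⟩
  rw [dotProduct_single_one]
  exact (zmod_two_cases (a i)).resolve_left hi

lemma sum_sgn {n : ℕ} (a : Fin n → ZMod 2) :
    ∑ x : Fin n → ZMod 2, sgn (a ⬝ᵥ x) = if a = 0 then (2 : ℝ) ^ n else 0 := by
  split_ifs with h
  · subst h
    simp [ZMod.card]
  · obtain ⟨v, hv⟩ := exists_dot_eq_one h
    have := sum_shift (fun x => sgn (a ⬝ᵥ x)) v
    simp only [dotProduct_add, sgn_add, hv, sgn_one, mul_neg, mul_one, sum_neg_distrib] at this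
    linarith

/-! ### Fourier coefficients of Boolean functions -/

/-- The autocorrelation of the Fourier coefficients is the Fourier transform of `f² = 1`. The case
`c = 0` is Parseval's identity. -/
lemma autocorr {n : ℕ} {F : (Fin n → ZMod 2) → ℝ} (hF : ∀ x, synth F x = 1 ∨ synth F x = -1)
    (c : Fin n → ZMod 2) : ∑ a, F a * F (a + c) = if c = 0 then 1 else 0 := by
  have hsq : ∀ x, synth F x * synth F x = 1 := fun x => by rcases hF x with h | h <;> simp [h]
  have h1 : ∑ x : Fin n → ZMod 2, synth F x * synth F x * sgn (c ⬝ᵥ x)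
      = if c = 0 then (2 : ℝ) ^ n else 0 := by
    simp only [hsq, one_mul, sum_sgn]
  have h2 : ∑ x : Fin n → ZMod 2, synth F x * synth F x * sgn (c ⬝ᵥ x)
      = 2 ^ n * ∑ a, F a * F (a + c) := by
    calc _ = ∑ x : Fin n → ZMod 2, ∑ a, ∑ b, F a * F b * sgn ((a + b + c) ⬝ᵥ x) := by
          refine sum_congr rfl fun x _ => ?_
          rw [synth, sum_mul_sum, sum_mul]
          refine sum_congr rfl fun a _ => ?_
          rw [sum_mul]
          refine sum_congr rfl fun b _ => ?_
          rw [add_dotProduct, add_dotProduct, sgn_add, sgn_add]; ring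
      _ = ∑ a, ∑ b, F a * F b * ∑ x : Fin n → ZMod 2, sgn ((a + b + c) ⬝ᵥ x) := by
          rw [sum_comm]
          refine sum_congr rfl fun a _ => ?_
          rw [sum_comm]
          refine sum_congr rfl fun b _ => ?_
          rw [mul_sum]
      _ = _ := by
          rw [mul_sum]
          refine sum_congr rfl fun a _ => ?_
          rw [sum_eq_single (a + c)]
          · rw [sum_sgn, if_pos]
            · ring
            · rw [show a + (a + c) + c = (a + a) + (c + c) by abel, vec_add_self, vec_add_self,
                add_zero]
          · intro b _ hb
            rw [sum_sgn, if_neg, mul_zero]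
            intro h
            apply hb
            have : b = (a + b + c) + (a + c) := by
              rw [show (a + b + c) + (a + c) = b + (a + a) + (c + c) by abel, vec_add_self,
                vec_add_self, add_zero, add_zero]
            rw [this, h, zero_add]
          · simp
  have h3 : (2 : ℝ) ^ n ≠ 0 := by positivity
  apply mul_left_cancel₀ h3
  rw [← h2, h1]
  split_ifs <;> simp

lemma parseval {n : ℕ} {F : (Fin n → ZMod 2) → ℝ} (hF : ∀ x, synth F x = 1 ∨ synth F x = -1) :
    ∑ a, F a ^ 2 = 1 := by
  have := autocorr hF 0
  simpa [sq] using this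

lemma abs_coeff_le_one {n : ℕ} {F : (Fin n → ZMod 2) → ℝ}
    (hF : ∀ x, synth F x = 1 ∨ synth F x = -1) (a : Fin n → ZMod 2) : |F a| ≤ 1 := by
  have h := single_le_sum (f := fun a => F a ^ 2) (fun i _ => sq_nonneg _) (mem_univ a)
  simp only [parseval hF] at h
  exact (sq_le_one_iff_abs_le_one _).mp h

lemma one_le_norm {n : ℕ} {F : (Fin n → ZMod 2) → ℝ}
    (hF : ∀ x, synth F x = 1 ∨ synth F x = -1) : 1 ≤ ∑ a, |F a| := by
  rw [← parseval hF]
  refine sum_le_sum fun a _ => ?_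
  rw [← sq_abs]
  nlinarith [abs_coeff_le_one hF a, abs_nonneg (F a)]

lemma one_sub_sq_le {n : ℕ} {F : (Fin n → ZMod 2) → ℝ}
    (hF : ∀ x, synth F x = 1 ∨ synth F x = -1) {α : Fin n → ZMod 2} {m : ℝ} (hm0 : 0 ≤ m)
    (hm : ∀ d, d ≠ α → |F d| ≤ m) : 1 - |F α| ^ 2 ≤ m * ∑ a, |F a| := by
  have h1 := parseval hF
  rw [← add_sum_erase _ _ (mem_univ α)] at h1
  have h2 : ∑ a ∈ univ.erase α, F a ^ 2 ≤ ∑ a ∈ univ.erase α, m * |F a| := by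
    refine sum_le_sum fun a ha => ?_
    rw [← sq_abs, sq]
    exact mul_le_mul_of_nonneg_right (hm a (ne_of_mem_erase ha)) (abs_nonneg _)
  have h3 : ∑ a ∈ univ.erase α, m * |F a| ≤ ∑ a, m * |F a| :=
    sum_le_sum_of_subset_of_nonneg (erase_subset _ _) fun _ _ _ => by positivity
  rw [← mul_sum univ] at h3
  rw [sq_abs]
  linarith

/-! ### Restriction to a hyperplane -/

/-- The linear form `d ↦ d ⬝ᵥ v` takes the value `0` at exactly one of `d`, `d + c`. -/
lemma half_sum {n : ℕ} {h : (Fin n → ZMod 2) → ℝ} {c v : Fin n → ZMod 2} (hcv : c ⬝ᵥ v = 1)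
    (hh : ∀ d, h (d + c) = h d) :
    ∑ d, (if d ⬝ᵥ v = 0 then h d else 0) = (∑ d, h d) / 2 := by
  have h1 := sum_shift (fun d => if d ⬝ᵥ v = 0 then h d else 0) c
  have h2 : ∑ d, (if d ⬝ᵥ v = 0 then h d else 0)
      + ∑ d, (if (d + c) ⬝ᵥ v = 0 then h (d + c) else 0) = ∑ d, h d := by
    rw [← sum_add_distrib]
    refine sum_congr rfl fun d _ => ?_
    have e : (1 + 1 : ZMod 2) = 0 := by decide
    rw [hh, add_dotProduct, hcv]
    rcases zmod_two_cases (d ⬝ᵥ v) with hd | hd <;> simp [hd, e]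
  linarith

lemma synth_fold_of_eq {n : ℕ} (F : (Fin n → ZMod 2) → ℝ) {c v x : Fin n → ZMod 2} {b : ZMod 2}
    (hcv : c ⬝ᵥ v = 1) (hx : c ⬝ᵥ x = b) : synth (foldCoeff F c v b) x = synth F x := by
  have e1 : synth (foldCoeff F c v b) x = ∑ d, (if d ⬝ᵥ v = 0 then
      (F d + sgn b * F (d + c)) * sgn (d ⬝ᵥ x) else 0) := by
    refine sum_congr rfl fun d _ => ?_
    simp only [foldCoeff]; split_ifs <;> simp
  rw [e1, half_sum hcv]
  · have e2 := sum_shift (fun d => F d * sgn (d ⬝ᵥ x)) c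
    have e3 : ∑ d, (F d + sgn b * F (d + c)) * sgn (d ⬝ᵥ x)
        = ∑ d, F d * sgn (d ⬝ᵥ x) + ∑ d, F (d + c) * sgn ((d + c) ⬝ᵥ x) := by
      rw [← sum_add_distrib]
      refine sum_congr rfl fun d _ => ?_
      rw [add_dotProduct, sgn_add, hx]; ring
    rw [e3, e2, synth]; ring
  · intro d
    rw [vec_add_add, add_dotProduct, sgn_add, hx]
    linear_combination F d * sgn (d ⬝ᵥ x) * sgn_mul_self b

lemma synth_fold_add {n : ℕ} (F : (Fin n → ZMod 2) → ℝ) (c v x : Fin n → ZMod 2) (b : ZMod 2) :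
    synth (foldCoeff F c v b) (x + v) = synth (foldCoeff F c v b) x := by
  refine sum_congr rfl fun d _ => ?_
  simp only [foldCoeff]
  split_ifs with h
  · rw [dotProduct_add, h, add_zero]
  · simp

lemma dot_add_eq {n : ℕ} {c v x : Fin n → ZMod 2} {b : ZMod 2}
    (hcv : c ⬝ᵥ v = 1) (hx : c ⬝ᵥ x ≠ b) : c ⬝ᵥ (x + v) = b := by
  rw [dotProduct_add, hcv]
  generalize c ⬝ᵥ x = y at *
  revert y b; decide

lemma synth_fold_bool {n : ℕ} {F : (Fin n → ZMod 2) → ℝ}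
    (hF : ∀ x, synth F x = 1 ∨ synth F x = -1) {c v : Fin n → ZMod 2} (b : ZMod 2)
    (hcv : c ⬝ᵥ v = 1) (x : Fin n → ZMod 2) :
    synth (foldCoeff F c v b) x = 1 ∨ synth (foldCoeff F c v b) x = -1 := by
  by_cases hx : c ⬝ᵥ x = b
  · rw [synth_fold_of_eq F hcv hx]; exact hF x
  · rw [← synth_fold_add, synth_fold_of_eq F hcv (dot_add_eq hcv hx)]; exact hF _

/-- The cancellation in `p + q` is `0` or `2 * min |p| |q|`, according to the sign of `p * q`. -/
lemma cancel_bound {p q m : ℝ} (hm : 0 < m) (hp : |p| ≤ m) (hq : |q| ≤ m) :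
    -2 * (p * q) / m ≤ |p| + |q| - |p + q| := by
  rw [div_le_iff₀ hm]
  have hp' := abs_le.mp hp
  have hq' := abs_le.mp hq
  rcases le_total 0 p with h1 | h1 <;> rcases le_total 0 q with h2 | h2 <;>
    rcases le_total 0 (p + q) with h3 | h3 <;>
    simp only [abs_of_nonneg, abs_of_nonpos, h1, h2, h3] <;> nlinarith

/-- Folding two dominant coefficients onto each other lowers the spectral norm by at least twice the
largest coefficient. -/
lemma fold_norm_le {n : ℕ} {F : (Fin n → ZMod 2) → ℝ}
    (hF : ∀ x, synth F x = 1 ∨ synth F x = -1) {α β v : Fin n → ZMod 2} {b : ZMod 2}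
    (hne : α ≠ β) (hv : (α + β) ⬝ᵥ v = 1) (hβ : 0 < |F β|)
    (hmax : ∀ d, d ≠ α → |F d| ≤ |F β|) (hb : sgn b * (F α * F β) = |F α| * |F β|) :
    ∑ d, |foldCoeff F (α + β) v b d| ≤ ∑ d, |F d| - 2 * |F α| := by
  set c := α + β with hc
  have hαc : α + c = β := by rw [hc, ← add_assoc, vec_add_self, zero_add]
  have hβc : β + c = α := by rw [hc, add_comm α, ← add_assoc, vec_add_self, zero_add]
  have hc0 : c ≠ 0 := fun h => by rw [h, add_zero] at hαc; exact hne hαc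
  have habs : |sgn b| = 1 := by rcases zmod_two_cases b with rfl | rfl <;> simp
  have e1 : ∑ d, |foldCoeff F c v b d| = (∑ d, |F d + sgn b * F (d + c)|) / 2 := by
    rw [← half_sum hv]
    · refine sum_congr rfl fun d _ => ?_
      simp only [foldCoeff]; split_ifs <;> simp
    · intro d
      rw [vec_add_add, show F (d + c) + sgn b * F d = sgn b * (F d + sgn b * F (d + c)) by
        linear_combination -F (d + c) * sgn_mul_self b, abs_mul, habs, one_mul]
  have key : ∀ d, -2 * (sgn b * (F d * F (d + c))) / |F β|
      + (if d = α then 2 * |F α| else 0) + (if d = β then 2 * |F α| else 0)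
      ≤ |F d| + |F (d + c)| - |F d + sgn b * F (d + c)| := by
    -- at `α` and `β` the left side is zero, and the right side is nonnegative everywhere
    have tri : ∀ d, 0 ≤ |F d| + |F (d + c)| - |F d + sgn b * F (d + c)| := fun d => by
      have := abs_add_le (F d) (sgn b * F (d + c))
      rw [abs_mul, habs, one_mul] at this
      linarith
    intro d
    by_cases h1 : d = α
    · subst h1
      refine le_trans (le_of_eq ?_) (tri d)
      rw [hαc, hb, if_pos rfl, if_neg hne]
      field_simp; ring
    · by_cases h2 : d = β
      · subst h2
        refine le_trans (le_of_eq ?_) (tri d)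
        rw [hβc, mul_comm (F d), hb, if_pos rfl, if_neg h1]
        field_simp; ring
      · have h3 : d + c ≠ α := fun h => h2 (by rw [← hαc, ← h, vec_add_add])
        have := cancel_bound (p := F d) (q := sgn b * F (d + c)) hβ (hmax d h1)
          (by rw [abs_mul, habs, one_mul]; exact hmax _ h3)
        rw [abs_mul, habs, one_mul] at this
        rw [if_neg h1, if_neg h2, add_zero, add_zero]
        convert this using 3
        ring
  have hsum := sum_le_sum fun d (_ : d ∈ univ) => key d
  rw [sum_add_distrib, sum_add_distrib, sum_sub_distrib, sum_add_distrib, sum_ite_eq',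
    sum_ite_eq', if_pos (mem_univ _), if_pos (mem_univ _), ← sum_div, ← mul_sum, ← mul_sum,
    autocorr hF, if_neg hc0, sum_shift (fun d => |F d|)] at hsum
  rw [e1]
  simp only [mul_zero, zero_div] at hsum
  linarith

lemma exists_sgn_mul_eq (p q : ℝ) : ∃ b, sgn b * (p * q) = |p| * |q| := by
  rw [← abs_mul]
  rcases le_total 0 (p * q) with h | h
  · exact ⟨0, by simp [abs_of_nonneg h]⟩
  · exact ⟨1, by simp [abs_of_nonpos h]⟩

/-- Folding `α` and `β` onto each other with the favourable sign produces a coefficient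
`|F α| + |F β|`, located at whichever of `α`, `β` is orthogonal to `v`. -/
lemma exists_fold_coeff {n : ℕ} (F : (Fin n → ZMod 2) → ℝ) {α β v : Fin n → ZMod 2} {b : ZMod 2}
    (hv : (α + β) ⬝ᵥ v = 1) (hb : sgn b * (F α * F β) = |F α| * |F β|) :
    ∃ d, |F α| + |F β| ≤ |foldCoeff F (α + β) v b d| := by
  have hαc : α + (α + β) = β := by rw [← add_assoc, vec_add_self, zero_add]
  have hβc : β + (α + β) = α := by rw [add_comm α, ← add_assoc, vec_add_self, zero_add]
  have gen : ∀ p q : ℝ, sgn b * (p * q) = |p| * |q| → |p| + |q| ≤ |p + sgn b * q| := by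
    intro p q h
    have h1 : (|p| + |q|) ^ 2 = (p + sgn b * q) ^ 2 := by
      have := sgn_mul_self b
      linear_combination (sq_abs p) + (sq_abs q) - 2 * h - q ^ 2 * this
    rw [← abs_of_nonneg (by positivity : 0 ≤ |p| + |q|)]
    exact (sq_eq_sq_iff_abs_eq_abs _ _).mp h1 |>.le
  rcases zmod_two_cases (α ⬝ᵥ v) with h | h
  · refine ⟨α, ?_⟩
    rw [foldCoeff, if_pos h, hαc]
    exact gen _ _ hb
  · refine ⟨β, ?_⟩
    have h' : β ⬝ᵥ v = 0 := by
      rw [add_dotProduct, h] at hv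
      simpa using hv
    rw [foldCoeff, if_pos h', hβc, add_comm]
    exact gen _ _ (by rw [mul_comm (F β), hb, mul_comm])

/-! ### Greedy restriction -/

/-- The greedy restriction, by induction on a bound for the potential
`∑ |F| + (4/3) K (1 - max |F|)`. The base point `x₀` guarantees that the equations defining the
subspace are consistent even if the forms in `S` are dependent. -/
lemma greedy {n : ℕ} {K : ℝ} (hK : 0 < K) (k : ℕ) : ∀ F : (Fin n → ZMod 2) → ℝ,
    (∀ x, synth F x = 1 ∨ synth F x = -1) → ∑ a, |F a| ≤ K →
    (∃ α, ∑ a, |F a| + 4 / 3 * K * (1 - |F α|) ≤ k) →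
    ∃ (S : Finset (Fin n → ZMod 2)) (x₀ : Fin n → ZMod 2), #S ≤ k + 1 ∧
      ∀ x, (∀ a ∈ S, a ⬝ᵥ x = a ⬝ᵥ x₀) → synth F x = synth F x₀ := by
  induction k with
  | zero =>
    rintro F hF _ ⟨α, hα⟩
    have h1 := one_le_norm hF
    have h2 : 0 ≤ 4 / 3 * K * (1 - |F α|) :=
      mul_nonneg (by positivity) (by linarith [abs_coeff_le_one hF α])
    simp only [Nat.cast_zero] at hα
    linarith
  | succ k ih =>
    rintro F hF hFK ⟨α₀, hα₀⟩
    obtain ⟨α, -, hα⟩ := exists_max_image univ (fun a => |F a|) ⟨α₀, mem_univ _⟩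
    by_cases hex : ∃ d, d ≠ α ∧ F d ≠ 0
    · obtain ⟨d₀, hd₀, hFd₀⟩ := hex
      obtain ⟨β, hβ, hβmax⟩ := exists_max_image (univ.erase α) (fun a => |F a|)
        ⟨d₀, mem_erase.mpr ⟨hd₀, mem_univ _⟩⟩
      have hβα : β ≠ α := ne_of_mem_erase hβ
      have hmax : ∀ d, d ≠ α → |F d| ≤ |F β| := fun d hd =>
        hβmax d (mem_erase.mpr ⟨hd, mem_univ _⟩)
      have hβ0 : 0 < |F β| := (abs_pos.mpr hFd₀).trans_le (hmax d₀ hd₀)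
      have hc0 : α + β ≠ 0 := fun h => hβα (by
        rw [← vec_add_add β α, add_comm β α, h, zero_add])
      obtain ⟨v, hv⟩ := exists_dot_eq_one hc0
      obtain ⟨b, hb⟩ := exists_sgn_mul_eq (F α) (F β)
      have hnorm := fold_norm_le hF hβα.symm hv hβ0 hmax hb
      obtain ⟨α', hα'⟩ := exists_fold_coeff F hv hb
      have hpars := one_sub_sq_le hF hβ0.le hmax
      have hgain : 1 - |F α| ^ 2 ≤ |F β| * K :=
        hpars.trans (mul_le_mul_of_nonneg_left hFK hβ0.le)
      have hαα₀ : |F α₀| ≤ |F α| := hα α₀ (mem_univ _)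
      obtain ⟨S, x₀, hS, hconst⟩ := ih (foldCoeff F (α + β) v b) (synth_fold_bool hF b hv)
        (by linarith [abs_nonneg (F α)]) ⟨α', by
          push_cast at hα₀
          have h1 : K * (|F α| + |F β|) ≤ K * |foldCoeff F (α + β) v b α'| :=
            mul_le_mul_of_nonneg_left hα' hK.le
          have h2 : K * |F α₀| ≤ K * |F α| := mul_le_mul_of_nonneg_left hαα₀ hK.le
          have h3 : 0 ≤ K * |F β| := by positivity
          rcases le_total (1 / 2) |F α| with h | h
          · nlinarith
          · have h4 : |F α| ^ 2 ≤ 1 / 4 := by nlinarith [abs_nonneg (F α)]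
            nlinarith [abs_nonneg (F α)]⟩
      -- `x₀ + w` is the projection of `x₀` along `v` to the hyperplane `(α + β) ⬝ᵥ x = b`
      obtain ⟨w, hw0, hwinv, hw⟩ : ∃ w : Fin n → ZMod 2, (α + β) ⬝ᵥ (x₀ + w) = b ∧
          (∀ x, synth (foldCoeff F (α + β) v b) (x + w) = synth (foldCoeff F (α + β) v b) x) ∧
          w + w = 0 := by
        by_cases hx : (α + β) ⬝ᵥ x₀ = b
        · exact ⟨0, by rwa [add_zero], fun x => by rw [add_zero], add_zero _⟩
        · exact ⟨v, dot_add_eq hv hx, fun x => synth_fold_add F _ v x b, vec_add_self v⟩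
      refine ⟨insert (α + β) S, x₀ + w, (card_insert_le _ _).trans (by omega), fun y hy => ?_⟩
      have hyb : (α + β) ⬝ᵥ y = b := by rw [hy _ (mem_insert_self _ _), hw0]
      rw [← synth_fold_of_eq F hv hyb, ← synth_fold_of_eq F hv hw0, hwinv x₀, ← hwinv y]
      apply hconst
      intro a ha
      rw [dotProduct_add, hy a (mem_insert_of_mem ha), dotProduct_add, add_assoc,
        ← dotProduct_add, hw, dotProduct_zero, add_zero]
    · push Not at hex
      refine ⟨{α}, 0, by simp, fun x hx => ?_⟩
      have h1 : ∀ y, synth F y = F α * sgn (α ⬝ᵥ y) := fun y =>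
        sum_eq_single α (fun d _ hd => by rw [hex d hd, zero_mul]) (by simp)
      rw [h1, h1, hx α (mem_singleton_self _)]

/-! ### Spectral norm and sparsity -/

/-- Fourier inversion. -/
lemma synth_fCoeff {n : ℕ} (f : (Fin n → ZMod 2) → ℝ) (x : Fin n → ZMod 2) :
    synth (fun a => fCoeff n f (dotProductEquiv (ZMod 2) (Fin n) a)) x = f x := by
  have h3 : (2 : ℝ) ^ n ≠ 0 := by positivity
  calc _ = ∑ a : Fin n → ZMod 2, ∑ y, (2 ^ n : ℝ)⁻¹ * f y * sgn ((x + y) ⬝ᵥ a) := by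
        refine sum_congr rfl fun a _ => ?_
        simp only [fCoeff]
        rw [mul_sum, sum_mul]
        refine sum_congr rfl fun y _ => ?_
        rw [add_dotProduct, sgn_add, dotProduct_comm x a, dotProduct_comm y a]
        simp only [sgn, dotProductEquiv_apply_apply]
        ring
    _ = ∑ y, (2 ^ n : ℝ)⁻¹ * f y * ∑ a : Fin n → ZMod 2, sgn ((x + y) ⬝ᵥ a) := by
        rw [sum_comm]
        simp only [mul_sum]
    _ = f x := by
        rw [sum_eq_single x]
        · rw [sum_sgn, if_pos (vec_add_self x)]
          field_simp
        · intro y _ hy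
          rw [sum_sgn, if_neg, mul_zero]
          intro h
          exact hy (by rw [← vec_add_add y x, add_comm y x, h, zero_add])
        · simp

lemma norm_le_sqrt_spar {n : ℕ} {f : (Fin n → ZMod 2) → ℝ} (hf : IsBooleanFn n f) :
    ∑ a, |fCoeff n f (dotProductEquiv (ZMod 2) (Fin n) a)| ≤ √(fSpar n f) := by
  classical
  set F : (Fin n → ZMod 2) → ℝ := fun a => fCoeff n f (dotProductEquiv (ZMod 2) (Fin n) a) with hFd
  have hF : ∀ x, synth F x = 1 ∨ synth F x = -1 := fun x => by rw [synth_fCoeff]; exact hf x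
  have hcard : #{a | F a ≠ 0} = fSpar n f := by
    rw [fSpar, ← Set.ncard_coe_finset,
      ← Set.ncard_image_of_injective _ (dotProductEquiv (ZMod 2) (Fin n)).injective]
    congr 1
    ext γ
    constructor
    · rintro ⟨a, ha, rfl⟩
      simpa [hFd, fSupp] using ha
    · intro h
      refine ⟨(dotProductEquiv (ZMod 2) (Fin n)).symm γ, ?_, by simp⟩
      simpa [hFd, fSupp] using h
  apply Real.le_sqrt_of_sq_le
  have h1 : ∑ a, |F a| = ∑ a with F a ≠ 0, |F a| := by
    rw [sum_filter]
    refine sum_congr rfl fun a _ => ?_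
    split_ifs with h
    · rfl
    · simpa using h
  rw [h1]
  refine sq_sum_le_card_mul_sum_sq.trans ?_
  rw [hcard]
  refine mul_le_of_le_one_right (Nat.cast_nonneg _) ?_
  rw [← parseval hF]
  simp only [sq_abs]
  exact sum_le_sum_of_subset_of_nonneg (subset_univ _) fun _ _ _ => sq_nonneg _

/-- There is a constant `C > 0` such that every Boolean function `f` with Fourier
sparsity `s` is constant on some affine subspace of `𝔽₂ⁿ` of co-dimension at most
`C * √s`. -/
theorem exists_affine_subspace_codim_sqrt :
    ∃ C : ℝ, 0 < C ∧
      ∀ (n : ℕ) (f : (Fin n → ZMod 2) → ℝ), IsBooleanFn n f →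
        ∃ (d : ℕ) (γ : Fin d → DualF n) (b : Fin d → ZMod 2) (v : ℝ),
          (d : ℝ) ≤ C * Real.sqrt (fSpar n f) ∧
          LinearIndependent (ZMod 2) γ ∧
          (∀ x, (∀ i, γ i x = b i) → f x = v) := by
  refine ⟨5, by norm_num, fun n f hf => ?_⟩
  set F : (Fin n → ZMod 2) → ℝ := fun a => fCoeff n f (dotProductEquiv (ZMod 2) (Fin n) a) with hFd
  have hsynth : ∀ x, synth F x = f x := synth_fCoeff f
  have hF : ∀ x, synth F x = 1 ∨ synth F x = -1 := fun x => by rw [hsynth]; exact hf x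
  have hA := norm_le_sqrt_spar hf
  have hA1 := one_le_norm hF
  set A := ∑ a, |F a| with hAd
  obtain ⟨S, x₀, hS, hconst⟩ := greedy (K := A) (by linarith) ⌈7 / 3 * A⌉₊ F hF le_rfl
    ⟨0, by
      have h1 := Nat.le_ceil (7 / 3 * A)
      have h2 : 0 ≤ A * |F 0| := by positivity
      nlinarith⟩
  have hceil := Nat.ceil_lt_add_one (show 0 ≤ 7 / 3 * A by linarith)
  -- pass to a basis of the span of `S`, which defines the same affine subspace
  obtain ⟨B, hBS, hspan, hli⟩ := exists_linearIndependent (ZMod 2) (S : Set (Fin n → ZMod 2))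
  have hBfin : B.Finite := S.finite_toSet.subset hBS
  have hBcard : B.ncard ≤ #S := by
    rw [← Set.ncard_coe_finset]
    exact Set.ncard_le_ncard hBS S.finite_toSet
  have : Finite B := hBfin
  let e : Fin B.ncard ≃ B := (Finite.equivFin B).symm
  refine ⟨B.ncard, fun i => dotProductEquiv (ZMod 2) (Fin n) (e i), fun i => (e i : _) ⬝ᵥ x₀, f x₀,
    ?_, ?_, ?_⟩
  · have h1 : (B.ncard : ℝ) ≤ ⌈7 / 3 * A⌉₊ + 1 := by exact_mod_cast hBcard.trans hS
    linarith
  · exact (hli.comp e e.injective).map' (dotProductEquiv (ZMod 2) (Fin n)).toLinearMap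
      (LinearEquiv.ker _)
  · intro x hx
    rw [← hsynth, ← hsynth]
    apply hconst
    intro a ha
    have haB : a ∈ Submodule.span (ZMod 2) B := hspan ▸ Submodule.subset_span ha
    clear ha
    induction haB using Submodule.span_induction with
    | mem y hy =>
      have := hx (e.symm ⟨y, hy⟩)
      simpa using this
    | zero => simp
    | add y z _ _ h1 h2 => rw [add_dotProduct, add_dotProduct, h1, h2]
    | smul t y _ h1 => rw [smul_dotProduct, smul_dotProduct, h1]
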